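/- arXiv:2209.12246 — 2 statements merged into one kernel-verified Lean document; each statement's English description precedes it below -/
import Mathlib

section
/- Let Ω be a class of unital C*-algebras and let A be a finite, infinite-dimensional, simple, unital C*-algebra. If A belongs to the class TAΩ (Elliott–Niu tracial approximation by algebras in Ω), then A belongs to the class GTAΩ. -/
open Filter Topology

/-- An element of a C*-algebra is positive if it is of the form `x* x`. -/
def IsPos {A : Type*} [Mul A] [Star A] (a : A) : Prop := ∃ x : A, a = star x * x

/-- Cuntz subequivalence `a ≾_A b`. -/
def CuntzBelow {A : Type*} [NonUnitalNormedRing A] [Star A] (a b : A) : Prop :=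
  ∃ v : ℕ → A, Tendsto (fun n => ‖v n * b * star (v n) - a‖) atTop (nhds 0)

/-- `x ∈_ε S`: `x` lies within `ε` of the set `S`. -/
def ApproxIn {A : Type*} [NormedAddGroup A] (x : A) (S : Set A) (ε : ℝ) : Prop :=
  ∃ y ∈ S, ‖x - y‖ < ε

/-- `(a - ε)₊`, via continuous functional calculus. -/
noncomputable def CutPos {A : Type*} [CStarAlgebra A] (a : A) (ε : ℝ) : A :=
  cfc (fun t : ℝ => max (t - ε) 0) a

/-- A C*-algebra is simple if it is nontrivial and has no proper nontrivial
closed two-sided ideals. -/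
def IsSimpleCStarAlgebra (A : Type*) [NonUnitalNormedRing A] : Prop :=
  Nontrivial A ∧ ∀ I : TwoSidedIdeal A, IsClosed (I : Set A) →
    (I : Set A) = {0} ∨ (I : Set A) = Set.univ

variable {A : Type*} [CStarAlgebra A]

/-- Membership in the class `WTAΩ` (Elliott–Fan–Fang weak tracial approximation),
where the class `Ω` is modelled as a set of (C*-)subalgebras of `A`. -/
def MemWTA (Ω : Set (NonUnitalStarSubalgebra ℂ A)) : Prop :=
  ∀ ε : ℝ, 0 < ε → ∀ F : Finset A, ∀ a : A, IsPos a → a ≠ 0 →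
    ∃ B ∈ Ω, IsClosed (B : Set A) ∧
      ∃ p ∈ B, IsSelfAdjoint p ∧ p * p = p ∧ (∀ b ∈ B, p * b = b ∧ b * p = b) ∧
        ∃ g ∈ B, IsPos g ∧ IsPos (1 - g) ∧
          (∀ x ∈ F, ApproxIn ((p - g) * x) (B : Set A) ε ∧
            ApproxIn (x * (p - g)) (B : Set A) ε) ∧
          (∀ x ∈ F, ‖(p - g) * x - x * (p - g)‖ < ε) ∧
          CuntzBelow (1 - (p - g)) a ∧
          ‖a‖ - ε ≤ ‖(p - g) * a * (p - g)‖

/-- Membership in the class `GTAΩ` (generalized/weak tracial approximation),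
where the class `Ω` is modelled as a set of (C*-)subalgebras of `A`. -/
def MemGTA (Ω : Set (NonUnitalStarSubalgebra ℂ A)) : Prop :=
  ∀ ε : ℝ, 0 < ε → ∀ F : Finset A, ∀ a b : A, IsPos a → ‖a‖ = 1 → IsPos b → ‖b‖ ≤ 1 →
    ∃ B ∈ Ω, IsClosed (B : Set A) ∧
      ∃ r ∈ B, IsPos r ∧ ‖r‖ ≤ 1 ∧
        (∀ x ∈ F, ApproxIn (r * x) (B : Set A) ε ∧ ApproxIn (x * r) (B : Set A) ε) ∧
        (∀ x ∈ F, ‖r * x - x * r‖ < ε) ∧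
        CuntzBelow (CutPos (b * b - b * r * b) ε) a ∧
        1 - ε ≤ ‖r * a * r‖

/-- Membership in the class `TAΩ` (Elliott–Niu tracial approximation), where the
class `Ω` is modelled as a set of (C*-)subalgebras of `A`. -/
def MemTA (Ω : Set (NonUnitalStarSubalgebra ℂ A)) : Prop :=
  ∀ ε : ℝ, 0 < ε → ∀ F : Finset A, ∀ a : A, IsPos a → a ≠ 0 →
    ∃ B ∈ Ω, IsClosed (B : Set A) ∧
      ∃ p ∈ B, IsSelfAdjoint p ∧ p * p = p ∧ (∀ b ∈ B, p * b = b ∧ b * p = b) ∧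
        (∀ x ∈ F, ‖p * x - x * p‖ < ε) ∧
        (∀ x ∈ F, ApproxIn (p * x * p) (B : Set A) ε) ∧
        CuntzBelow (1 - p) a

/-- If `e` is an element with `e A e = ℂ e`, then a simple unital C*-algebra containing
`e ≠ 0` is finite-dimensional. -/
theorem finiteDimensional_of_corner (hA : IsSimpleCStarAlgebra A) {e : A} (he : e ≠ 0)
    (hcorner : ∀ x : A, ∃ z : ℂ, e * x * e = z • e) : FiniteDimensional ℂ A := by
  set S : Submodule ℂ A := Submodule.span ℂ (Set.range fun w : A × A => w.1 * e * w.2) with hS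
  have hgen : ∀ x y : A, x * e * y ∈ S := fun x y => Submodule.subset_span ⟨(x, y), rfl⟩
  have hleft : ∀ x, ∀ y ∈ S, x * y ∈ S := by
    intro x y hy
    induction hy using Submodule.span_induction with
    | mem y hy =>
      obtain ⟨w, rfl⟩ := hy
      simpa only [mul_assoc] using hgen (x * w.1) w.2
    | zero => simp
    | add y z _ _ h₁ h₂ => rw [mul_add]; exact S.add_mem h₁ h₂
    | smul c y _ h => rw [mul_smul_comm]; exact S.smul_mem c h
  have hright : ∀ x, ∀ y ∈ S, y * x ∈ S := by
    intro x y hy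
    induction hy using Submodule.span_induction with
    | mem y hy =>
      obtain ⟨w, rfl⟩ := hy
      simpa only [mul_assoc] using hgen w.1 (w.2 * x)
    | zero => simp
    | add y z _ _ h₁ h₂ => rw [add_mul]; exact S.add_mem h₁ h₂
    | smul c y _ h => rw [smul_mul_assoc]; exact S.smul_mem c h
  let J : TwoSidedIdeal A := TwoSidedIdeal.mk' (closure (S : Set A)) (subset_closure S.zero_mem)
    (fun hx hy => S.topologicalClosure.add_mem hx hy)
    (fun hx => S.topologicalClosure.neg_mem hx)
    (fun {x _} hy => map_mem_closure (continuous_const_mul x) hy (hleft x))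
    (fun {_ y} hx => map_mem_closure (f := (· * y)) (continuous_mul_const y) hx (hright y))
  have hJ : (J : Set A) = closure (S : Set A) := TwoSidedIdeal.coe_mk' ..
  have hone : (1 : A) ∈ S := by
    rcases hA.2 J (hJ ▸ isClosed_closure) with h0 | h0
    · have hmem : e ∈ (J : Set A) := by
        rw [hJ]; exact subset_closure (by simpa using hgen 1 1)
      rw [h0] at hmem
      exact absurd hmem he
    · have hmem : (1 : A) ∈ closure (S : Set A) := by rw [← hJ, h0]; trivial
      obtain ⟨j, hj, hd⟩ := Metric.mem_closure_iff.1 hmem 1 one_pos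
      rw [dist_eq_norm] at hd
      have hu : IsUnit j := by simpa using isUnit_one_sub_of_norm_lt_one hd
      obtain ⟨k, hk⟩ := hu.exists_left_inv
      exact hk ▸ hleft k j hj
  obtain ⟨n, c, w, hw⟩ := Submodule.mem_span_set'.1 hone
  choose xy hxy using fun i => (w i).2
  have hsum : (1 : A) = ∑ i, c i • ((xy i).1 * e * (xy i).2) := by
    rw [← hw]; exact Finset.sum_congr rfl fun i _ => by rw [← hxy i]
  have htop : Submodule.span ℂ
      (Set.range fun ij : Fin n × Fin n => (xy ij.1).1 * e * (xy ij.2).2) = ⊤ := by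
    rw [eq_top_iff]
    intro a _
    have ha : a = ∑ i, ∑ j, (c i • ((xy i).1 * e * (xy i).2)) * a *
        (c j • ((xy j).1 * e * (xy j).2)) := by
      simp_rw [← Finset.mul_sum, ← Finset.sum_mul, ← hsum]
      simp
    rw [ha]
    refine Submodule.sum_mem _ fun i _ => Submodule.sum_mem _ fun j _ => ?_
    obtain ⟨z, hz⟩ := hcorner ((xy i).2 * a * (xy j).1)
    have hij : (c i • ((xy i).1 * e * (xy i).2)) * a * (c j • ((xy j).1 * e * (xy j).2)) =
        (c j * (c i * z)) • ((xy i).1 * e * (xy j).2) := by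
      have : (xy i).1 * (e * ((xy i).2 * a * (xy j).1) * e) * (xy j).2 =
        z • ((xy i).1 * e * (xy j).2) := by rw [hz]; simp [mul_assoc]
      simp only [smul_mul_assoc, mul_smul_comm, mul_smul, ← this]
      simp only [mul_assoc]
    rw [hij]
    exact Submodule.smul_mem _ _ (Submodule.subset_span ⟨(i, j), rfl⟩)
  exact ⟨⟨(Set.finite_range _).toFinset, by simpa using htop⟩⟩

/-- A self-adjoint element with at most one nonzero spectral value is a scalar multiple of a
projection; otherwise bump functions separate two nonzero spectral values. -/
theorem IsSelfAdjoint.mul_self_eq_smul_or_exists_orthogonal {h : A} (hh : IsSelfAdjoint h) :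
    (∃ μ : ℝ, h * h = μ • h) ∨
      ∃ s d : A, IsSelfAdjoint (h * s) ∧ h * s ≠ 0 ∧ h * d ≠ 0 ∧
        (h * s) * (h * d) = 0 := by
  by_cases hsp : ∃ l ∈ spectrum ℝ h, ∃ m ∈ spectrum ℝ h, l ≠ 0 ∧ m ≠ 0 ∧ l ≠ m
  · right
    obtain ⟨l, hl, m, hm, hl0, hm0, hlm⟩ := hsp
    let φ : ℝ → ℝ → ℝ := fun k t => max 0 (|l - m| / 2 - |t - k|)
    have hφ : ∀ k, Continuous (φ k) := fun k => by fun_prop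
    have hpos : 0 < |l - m| / 2 := by have := abs_pos.2 (sub_ne_zero.2 hlm); linarith
    have hmul : ∀ k, h * cfc (φ k) h = cfc (fun t => t * φ k t) h := fun k => by
      rw [cfc_mul (fun t => t) (φ k) h (by fun_prop) (hφ k).continuousOn, cfc_id' ℝ h]
    have hne : ∀ k ∈ spectrum ℝ h, k ≠ 0 → h * cfc (φ k) h ≠ 0 := by
      intro k hk hk0 h0
      have := norm_apply_le_norm_cfc (fun t => t * φ k t) h hk (by fun_prop) hh
      rw [← hmul, h0, norm_zero, norm_le_zero_iff] at this
      simp [φ, hk0, hpos.not_ge] at this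
    refine ⟨cfc (φ l) h, cfc (φ m) h, ?_, hne l hl hl0, hne m hm hm0, ?_⟩
    · rw [hmul]; exact cfc_predicate _ h
    · rw [hmul, hmul, ← cfc_mul _ _ h (by fun_prop) (by fun_prop), ← cfc_zero ℝ h]
      refine cfc_congr fun t _ => ?_
      have : φ l t = 0 ∨ φ m t = 0 := by
        by_contra! hcon
        have h1 : 0 < |l - m| / 2 - |t - l| := by
          by_contra hle; exact hcon.1 (max_eq_left (not_lt.1 hle))
        have h2 : 0 < |l - m| / 2 - |t - m| := by
          by_contra hle; exact hcon.2 (max_eq_left (not_lt.1 hle))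
        have h3 := abs_sub_le l t m
        rw [abs_sub_comm l t] at h3
        linarith
      rcases this with h0 | h0 <;> simp [h0]
  · left
    have : ∃ μ : ℝ, ∀ t ∈ spectrum ℝ h, t = 0 ∨ t = μ := by
      by_cases hex : ∃ l ∈ spectrum ℝ h, l ≠ 0
      · obtain ⟨l, hl, hl0⟩ := hex
        refine ⟨l, fun t ht => ?_⟩
        by_contra! hcon
        exact hsp ⟨l, hl, t, ht, hl0, hcon.1, hcon.2.symm⟩
      · push Not at hex
        exact ⟨0, fun t ht => .inl (hex t ht)⟩
    obtain ⟨μ, hμ⟩ := this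
    refine ⟨μ, ?_⟩
    calc h * h = cfc (fun t : ℝ => t * t) h := by
          rw [cfc_mul (fun t => t) (fun t => t) h, cfc_id' ℝ h]
      _ = cfc (fun t : ℝ => μ * t) h := cfc_congr fun t ht => by
          rcases hμ t ht with rfl | rfl <;> simp
      _ = μ • h := by rw [cfc_const_mul μ (fun t => t) h, cfc_id' ℝ h]

/-- In an infinite-dimensional simple unital C*-algebra, every nonzero self-adjoint `g` has two
nonzero orthogonal elements in `g A`, the first of which is self-adjoint. -/
theorem exists_orthogonal_of_infinite (hinf : ¬ FiniteDimensional ℂ A)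
    (hA : IsSimpleCStarAlgebra A) {g : A} (hg : IsSelfAdjoint g) (hg0 : g ≠ 0) :
    ∃ s d : A, IsSelfAdjoint (g * s) ∧ g * s ≠ 0 ∧ g * d ≠ 0 ∧ (g * s) * (g * d) = 0 := by
  by_contra hno
  have hsq : ∀ x : A, IsSelfAdjoint x → ∃ μ : ℝ, (g * x * g) * (g * x * g) = μ • (g * x * g) := by
    intro x hx
    have hgx : IsSelfAdjoint (g * x * g) := by
      simpa [hg.star_eq] using hx.conjugate g
    refine hgx.mul_self_eq_smul_or_exists_orthogonal.resolve_right ?_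
    rintro ⟨s, d, h1, h2, h3, h4⟩
    exact hno ⟨x * g * s, x * g * d, by simpa only [mul_assoc] using h1,
      by simpa only [mul_assoc] using h2, by simpa only [mul_assoc] using h3,
      by simpa only [mul_assoc] using h4⟩
  have hgg : g * g ≠ 0 := fun h0 => hg0 <| by
    rwa [← CStarRing.star_mul_self_eq_zero_iff, hg.star_eq]
  have hgggg : g * g * (g * g) ≠ 0 := fun h0 => hgg <| by
    have hs : star (g * g) = g * g := by simp [hg.star_eq]
    rwa [← CStarRing.star_mul_self_eq_zero_iff, hs]
  obtain ⟨μ, hμ⟩ := hsq 1 (.one A)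
  rw [mul_one] at hμ
  have hμ0 : μ ≠ 0 := by rintro rfl; exact hgggg (by simpa using hμ)
  set e : A := μ⁻¹ • (g * g) with he
  have he0 : e ≠ 0 := smul_ne_zero (inv_ne_zero hμ0) hgg
  have hee : e * e = e := by
    rw [he, smul_mul_smul_comm, hμ, smul_smul]
    congr 1
    field_simp
  have hsqe : ∀ x : A, IsSelfAdjoint x → ∃ ν : ℝ, (e * x * e) * (e * x * e) = ν • (e * x * e) := by
    intro x hx
    have hgx : IsSelfAdjoint ((μ⁻¹ * μ⁻¹) • (g * x * g)) :=
      .smul (.all _) (by simpa [hg.star_eq] using hx.conjugate g)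
    obtain ⟨ν, hν⟩ := hsq _ hgx
    have : e * x * e = g * ((μ⁻¹ * μ⁻¹) • (g * x * g)) * g := by
      simp [he, mul_assoc, smul_smul]
    exact ⟨ν, by rw [this, hν]⟩
  have hreal : ∀ x : A, IsSelfAdjoint x → ∃ c : ℝ, e * x * e = c • e := by
    intro x hx
    obtain ⟨m, hm⟩ := hsqe x hx
    obtain ⟨t, ht0, htm⟩ : ∃ t : ℝ, t ≠ 0 ∧ m + t ≠ 0 := by
      by_cases h1 : m + 1 = 0
      · exact ⟨2, two_ne_zero, by intro h2; linarith⟩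
      · exact ⟨1, one_ne_zero, h1⟩
    obtain ⟨n, hn⟩ := hsqe (x + t • (1 : A)) (hx.add (.smul (.all _) (.one A)))
    set y := e * x * e with hy
    have hey : e * y = y := by simp only [hy, ← mul_assoc, hee]
    have hye : y * e = y := by simp only [hy, mul_assoc, hee]
    have hexp : e * (x + t • (1 : A)) * e = y + t • e := by
      simp [mul_add, add_mul, hee, hy]
    rw [hexp] at hn
    have hlin : (m + 2 * t - n) • y = (n * t - t * t) • e := by
      have : (y + t • e) * (y + t • e) = m • y + (2 * t) • y + (t * t) • e := by
        simp only [mul_add, add_mul, smul_mul_assoc, mul_smul_comm, hey, hye, hee, hm]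
        module
      rw [this] at hn
      have h2 := sub_eq_zero.2 hn
      rw [← sub_eq_zero, ← h2]
      module
    have hne : m + 2 * t - n ≠ 0 := by
      intro h0
      rw [h0, zero_smul, eq_comm, smul_eq_zero] at hlin
      have h1 := hlin.resolve_right he0
      have : t * (n - t) = 0 := by linarith
      have h3 := (mul_eq_zero.1 this).resolve_left ht0
      exact htm (by linarith)
    exact ⟨(m + 2 * t - n)⁻¹ * (n * t - t * t), by
      rw [mul_smul, ← hlin, smul_smul, inv_mul_cancel₀ hne, one_smul]⟩
  refine hinf (finiteDimensional_of_corner hA he0 fun x => ?_)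
  obtain ⟨c₁, h₁⟩ := hreal _ (realPart x).2
  obtain ⟨c₂, h₂⟩ := hreal _ (imaginaryPart x).2
  refine ⟨c₁ + Complex.I * c₂, ?_⟩
  conv_lhs => rw [← realPart_add_I_smul_imaginaryPart x]
  rw [mul_add, add_mul, h₁, mul_smul_comm Complex.I e, smul_mul_assoc Complex.I, h₂, add_smul,
    mul_smul]
  simp

/-- In a finite C*-algebra, an element `X` with `X X*` invertible is invertible. -/
theorem star_mul_inv_mul_self_of_finite (hfin : ∀ v : A, star v * v = 1 → v * star v = 1)
    {X Y : A} (hY : Y * (X * star X) = 1) (hY' : (X * star X) * Y = 1) :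
    star X * Y * X = 1 := by
  let _ := CStarAlgebra.spectralOrder A
  let _ := CStarAlgebra.spectralOrderedRing A
  have hpos : 0 ≤ X * star X := mul_star_self_nonneg X
  have hu : IsUnit (X * star X) := ⟨⟨_, Y, hY', hY⟩, rfl⟩
  obtain ⟨T, hT⟩ := (CFC.isUnit_sqrt_iff (X * star X) hpos).2 hu
  have hTT : (T : A) * T = X * star X := by rw [hT]; exact CFC.sqrt_mul_sqrt_self _ hpos
  have hTs : star (T : A) = T := by
    rw [hT]; exact (IsSelfAdjoint.of_nonneg (CFC.sqrt_nonneg _)).star_eq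
  have hTis : star ((T⁻¹ : Aˣ) : A) = (T⁻¹ : Aˣ) := by
    have h1 : star ((T⁻¹ : Aˣ) : A) * T = 1 := by rw [← hTs, ← star_mul]; simp
    exact Units.eq_inv_of_mul_eq_one_right h1
  have hYT : Y = (T⁻¹ : Aˣ) * (T⁻¹ : Aˣ) := by
    have : (X * star X) * ((T⁻¹ : Aˣ) * (T⁻¹ : Aˣ)) = 1 := by
      rw [← hTT]; simp [mul_assoc]
    calc Y = Y * ((X * star X) * ((T⁻¹ : Aˣ) * (T⁻¹ : Aˣ))) := by rw [this, mul_one]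
      _ = _ := by rw [← mul_assoc, hY, one_mul]
  have hiso : star (star X * (T⁻¹ : Aˣ)) * (star X * (T⁻¹ : Aˣ)) = 1 := by
    rw [star_mul, star_star, hTis]
    calc ((T⁻¹ : Aˣ) : A) * X * (star X * (T⁻¹ : Aˣ))
        = (T⁻¹ : Aˣ) * (X * star X) * (T⁻¹ : Aˣ) := by simp only [mul_assoc]
      _ = 1 := by rw [← hTT]; simp
  have := hfin _ hiso
  rw [star_mul, star_star, hTis] at this
  rw [← this, hYT]
  simp only [mul_assoc]

/-- In a finite C*-algebra, let `q = 1 - p` be a projection that is almost of the form `z z*`.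
If `z` and `d` are supported on an element `f` that is almost orthogonal to `p`,
then `z` cannot annihilate `d ≠ 0`. -/
theorem eq_zero_of_almost_supported (hfin : ∀ v : A, star v * v = 1 → v * star v = 1)
    {p z f d : A} (hp : IsSelfAdjoint p) (hpp : p * p = p)
    (hz : ‖z * star z - (1 - p)‖ ≤ 1 / 4) (hfs : IsSelfAdjoint f) (hzf : z * f = z)
    (hfd : f * d = d) (hzd : z * d = 0) (hpf : ‖p * f‖ ≤ 1 / 10) : d = 0 := by
  have hp1 : ‖p‖ ≤ 1 := IsStarProjection.norm_le p ⟨hpp, hp⟩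
  have hq1 : ‖1 - p‖ ≤ 1 := IsStarProjection.norm_le _ (IsStarProjection.one_sub ⟨hpp, hp⟩)
  have hzz : ‖z‖ * ‖z‖ ≤ 5 / 4 := by
    rw [← CStarRing.norm_self_mul_star]
    calc ‖z * star z‖ = ‖(z * star z - (1 - p)) + (1 - p)‖ := by simp
      _ ≤ _ := norm_add_le _ _
      _ ≤ 5 / 4 := by linarith
  have hz2 : ‖z‖ ≤ 6 / 5 := by nlinarith [norm_nonneg z]
  have hfp : ‖f * p‖ ≤ 1 / 10 := by
    rw [← norm_star, star_mul, hfs.star_eq, hp.star_eq]; exact hpf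
  have hzp : ‖z * p‖ ≤ 3 / 25 := by
    calc ‖z * p‖ = ‖z * (f * p)‖ := by rw [← mul_assoc, hzf]
      _ ≤ ‖z‖ * ‖f * p‖ := norm_mul_le _ _
      _ ≤ 6 / 5 * (1 / 10) := by gcongr
      _ = 3 / 25 := by norm_num
  set X : A := p + z * (1 - p) with hX
  have hXs : star X = p + (1 - p) * star z := by
    simp [hX, hp.star_eq]
  have hXX : X * star X = 1 - ((1 - p) - z * star z + (z * p) * star (z * p)) := by
    rw [hXs, hX, star_mul, hp.star_eq]
    have e1 : (1 - p) * p = 0 := by rw [sub_mul, hpp, one_mul, sub_self]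
    have e2 : p * (1 - p) = 0 := by rw [mul_sub, hpp, mul_one, sub_self]
    have e3 : (1 - p) * (1 - p) = 1 - p := by rw [mul_sub, e1, mul_one, sub_zero]
    calc (p + z * (1 - p)) * (p + (1 - p) * star z)
        = p * p + (p * (1 - p)) * star z + z * ((1 - p) * p)
          + z * ((1 - p) * (1 - p)) * star z := by noncomm_ring
      _ = p + z * star z - z * (p * p) * star z := by
          rw [hpp, e1, e2, e3]; noncomm_ring
      _ = _ := by noncomm_ring
  set E : A := (1 - p) - z * star z + (z * p) * star (z * p) with hE
  have hE1 : ‖E‖ ≤ 1 / 2 := by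
    calc ‖E‖ ≤ ‖(1 - p) - z * star z‖ + ‖(z * p) * star (z * p)‖ := norm_add_le _ _
      _ ≤ 1 / 4 + 3 / 25 * (3 / 25) := by
        rw [norm_sub_rev, CStarRing.norm_self_mul_star]
        gcongr
      _ ≤ 1 / 2 := by norm_num
  obtain ⟨U, hU⟩ : IsUnit (X * star X) := by
    rw [hXX]; exact isUnit_one_sub_of_norm_lt_one (by linarith)
  set Y : A := ((U⁻¹ : Aˣ) : A) with hYdef
  have hY1 : Y * (X * star X) = 1 := by rw [← hU]; simp [hYdef]
  have hY2 : (X * star X) * Y = 1 := by rw [← hU]; simp [hYdef]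
  have hone : ‖(1 : A)‖ ≤ 1 := by simpa using IsStarProjection.norm_le _ (IsStarProjection.one A)
  have hYn : ‖Y‖ ≤ 2 := by
    have h1 : Y = 1 + E * Y := by
      rw [hXX, sub_mul, one_mul] at hY2
      rw [← hY2]; abel
    have h2 : ‖Y‖ ≤ 1 + 1 / 2 * ‖Y‖ := by
      calc ‖Y‖ = ‖1 + E * Y‖ := by rw [← h1]
        _ ≤ ‖(1 : A)‖ + ‖E * Y‖ := norm_add_le _ _
        _ ≤ 1 + ‖E‖ * ‖Y‖ := add_le_add hone (norm_mul_le _ _)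
        _ ≤ _ := by gcongr
    linarith
  have hXn : ‖star X‖ ≤ 5 / 4 := by
    have : ‖X‖ * ‖X‖ ≤ 3 / 2 := by
      rw [← CStarRing.norm_self_mul_star, hXX]
      calc ‖1 - E‖ ≤ ‖(1 : A)‖ + ‖E‖ := norm_sub_le _ _
        _ ≤ 3 / 2 := by linarith
    rw [norm_star]
    nlinarith [norm_nonneg X]
  have hpd : ‖p * d‖ ≤ 1 / 10 * ‖d‖ := by
    calc ‖p * d‖ = ‖p * f * d‖ := by rw [mul_assoc, hfd]
      _ ≤ ‖p * f‖ * ‖d‖ := norm_mul_le _ _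
      _ ≤ _ := by gcongr
  have hXd : X * ((1 - p) * d) = -(z * (p * d)) := by
    calc X * ((1 - p) * d) = (p - p * p) * d + z * d - 2 • (z * (p * d))
          + z * ((p * p) * d) := by rw [hX]; noncomm_ring
      _ = _ := by rw [hpp, hzd]; noncomm_ring
  have hqd : ‖(1 - p) * d‖ ≤ 3 / 10 * ‖d‖ := by
    calc ‖(1 - p) * d‖ = ‖star X * Y * (X * ((1 - p) * d))‖ := by
          rw [← mul_assoc _ X, star_mul_inv_mul_self_of_finite hfin hY1 hY2, one_mul]
      _ ≤ ‖star X * Y‖ * ‖X * ((1 - p) * d)‖ := norm_mul_le _ _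
      _ ≤ (‖star X‖ * ‖Y‖) * (‖z‖ * ‖p * d‖) := by
          rw [hXd, norm_neg]; gcongr <;> exact norm_mul_le _ _
      _ ≤ (5 / 4 * 2) * (6 / 5 * (1 / 10 * ‖d‖)) := by gcongr
      _ = _ := by ring
  have hd : ‖d‖ ≤ 3 / 10 * ‖d‖ + 1 / 10 * ‖d‖ := by
    calc ‖d‖ = ‖(1 - p) * d + p * d‖ := by congr 1; noncomm_ring
      _ ≤ _ := (norm_add_le _ _).trans (add_le_add hqd hpd)
  exact norm_le_zero_iff.1 (by linarith [norm_nonneg d])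

theorem CuntzBelow.conj {x a : A} (h : CuntzBelow x a) (y : A) :
    CuntzBelow (y * x * star y) a := by
  obtain ⟨v, hv⟩ := h
  refine ⟨fun n => y * v n, ?_⟩
  have hlim : Tendsto (fun n => ‖y‖ * ‖v n * a * star (v n) - x‖ * ‖star y‖) atTop (𝓝 0) := by
    simpa using (hv.const_mul ‖y‖).mul_const ‖star y‖
  refine squeeze_zero (fun _ => norm_nonneg _) (fun n => ?_) hlim
  calc ‖y * v n * a * star (y * v n) - y * x * star y‖
      = ‖y * (v n * a * star (v n) - x) * star y‖ := by
        rw [star_mul]; congr 1; noncomm_ring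
    _ ≤ _ := norm_mul₃_le

theorem CuntzBelow.of_conj {x a y : A} (h : CuntzBelow x (y * a * star y)) : CuntzBelow x a := by
  obtain ⟨v, hv⟩ := h
  exact ⟨fun n => v n * y, by simpa only [star_mul, mul_assoc] using hv⟩

/-- The cut-down `(x - ε)₊` has the form `k x k*`. -/
theorem exists_cutPos_eq_conj {x : A} (hx : IsSelfAdjoint x) {ε : ℝ} (hε : 0 < ε) :
    ∃ k : A, CutPos x ε = k * x * star k := by
  let κ : ℝ → ℝ := fun t => √(max (t - ε) 0 / max t ε)
  have hκ : Continuous κ := by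
    refine Continuous.sqrt (Continuous.div (by fun_prop) (by fun_prop) fun t => ?_)
    exact (hε.trans_le (le_max_right _ _)).ne'
  refine ⟨cfc κ x, ?_⟩
  have hs : star (cfc κ x) = cfc κ x := (cfc_predicate κ x : IsSelfAdjoint _).star_eq
  have hmul : cfc κ x * x * cfc κ x = cfc (fun t => κ t * t * κ t) x := by
    rw [cfc_mul (fun t => κ t * t) κ x (by fun_prop) (by fun_prop),
      cfc_mul κ (fun t => t) x (by fun_prop) (by fun_prop), cfc_id' ℝ x]
  rw [hs, hmul, CutPos]
  refine cfc_congr fun t _ => ?_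
  have hsq : κ t * κ t = max (t - ε) 0 / max t ε :=
    Real.mul_self_sqrt (div_nonneg (le_max_right _ _) (hε.le.trans (le_max_right _ _)))
  have : κ t * t * κ t = κ t * κ t * t := by ring
  simp only [this, hsq]
  rcases le_total t ε with hle | hle
  · simp [max_eq_right (sub_nonpos.2 hle)]
  · rw [max_eq_left hle, div_mul_cancel₀ _ (hε.trans_le hle).ne']

/-- If a projection `p` almost commutes with `f`, where `f` is supported on the part of `a` above
`1 - η`, and `p a p` is smaller than `1 - ε`, then `p f` is small. -/
theorem norm_sq_mul_le_of_compression_lt {p a f m : A} (hp : IsSelfAdjoint p) (hpp : p * p = p)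
    (ha : ‖a‖ ≤ 1) (hf : IsSelfAdjoint f) (hf1 : ‖f‖ ≤ 1) {ε η ε' : ℝ} (hη : η ≤ 1)
    (hm : f * a * f = (1 - η) • (f * f) + star m * m) (hpap : ‖p * a * p‖ ≤ 1 - ε)
    (hcomm : ‖p * f - f * p‖ ≤ ε') : (ε - η) * ‖p * f‖ ^ 2 ≤ 2 * ε' := by
  let _ := CStarAlgebra.spectralOrder A
  let _ := CStarAlgebra.spectralOrderedRing A
  have hp1 : ‖p‖ ≤ 1 := IsStarProjection.norm_le p ⟨hpp, hp⟩
  have hs : star (f * p) = p * f := by rw [star_mul, hf.star_eq, hp.star_eq]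
  have hfp : ‖f * p‖ = ‖p * f‖ := by rw [← norm_star, hs]
  have hfp1 : ‖p * f‖ ≤ 1 := (norm_mul_le _ _).trans (mul_le_one₀ hp1 (norm_nonneg _) hf1)
  have hε' : 0 ≤ ε' := (norm_nonneg _).trans hcomm
  have hlow : (1 - η) * ‖p * f‖ ^ 2 ≤ ‖p * f * a * (f * p)‖ := by
    have hT : p * f * a * (f * p) = (1 - η) • (star (f * p) * (f * p)) + star (m * p) * (m * p) := by
      calc p * f * a * (f * p) = p * (f * a * f) * p := by simp only [mul_assoc]
        _ = _ := by
          rw [hm, hs, star_mul, hp.star_eq]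
          simp only [mul_add, add_mul, mul_smul_comm, smul_mul_assoc, mul_assoc]
    have hnn : 0 ≤ (1 - η) • (star (f * p) * (f * p)) :=
      smul_nonneg (by linarith) (star_mul_self_nonneg _)
    have hle := CStarAlgebra.norm_le_norm_of_nonneg_of_le hnn
      (hT ▸ le_add_of_nonneg_right (star_mul_self_nonneg (m * p)))
    rwa [norm_smul, CStarRing.norm_star_mul_self, Real.norm_of_nonneg (by linarith), hfp,
      ← sq] at hle
  have hup : ‖p * f * a * (f * p)‖ ≤ (1 - ε) * ‖p * f‖ ^ 2 + 2 * ε' := by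
    have h1 : ‖p * (p * f - f * p)‖ ≤ ε' :=
      (norm_mul_le _ _).trans ((mul_le_of_le_one_left (norm_nonneg _) hp1).trans hcomm)
    have h2 : ‖(p * f - f * p) * p‖ ≤ ε' :=
      (norm_mul_le _ _).trans ((mul_le_of_le_one_right (norm_nonneg _) hp1).trans hcomm)
    have hsplit : p * f * a * (f * p) = p * f * (p * a * p) * (f * p)
        + p * (p * f - f * p) * a * (f * p) - p * f * p * a * ((p * f - f * p) * p) := by
      have : p * f * (p * a * p) * (f * p) + p * (p * f - f * p) * a * (f * p)
          - p * f * p * a * ((p * f - f * p) * p) =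
          p * p * f * a * (f * p) + p * f * p * a * f * (p * p) - p * f * p * a * (f * p) := by
        noncomm_ring
      rw [this, hpp]; noncomm_ring
    have hn1 : ‖p * f * (p * a * p) * (f * p)‖ ≤ (1 - ε) * ‖p * f‖ ^ 2 := by
      calc _ ≤ ‖p * f‖ * ‖p * a * p‖ * ‖f * p‖ := norm_mul₃_le
        _ ≤ ‖p * f‖ * (1 - ε) * ‖f * p‖ := by gcongr
        _ = _ := by rw [hfp]; ring
    have hn2 : ‖p * (p * f - f * p) * a * (f * p)‖ ≤ ε' := by
      calc _ ≤ ‖p * (p * f - f * p)‖ * ‖a‖ * ‖f * p‖ := norm_mul₃_le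
        _ ≤ ε' * 1 * 1 := by rw [hfp]; gcongr
        _ = ε' := by ring
    have hn3 : ‖p * f * p * a * ((p * f - f * p) * p)‖ ≤ ε' := by
      calc _ ≤ ‖p * f * p‖ * ‖a‖ * ‖(p * f - f * p) * p‖ := norm_mul₃_le
        _ ≤ (1 * 1) * 1 * ε' := by
          gcongr
          exact (norm_mul_le _ _).trans (by gcongr)
        _ = ε' := by ring
    rw [hsplit]
    refine (norm_sub_le _ _).trans ?_
    linarith [norm_add_le (p * f * (p * a * p) * (f * p)) (p * (p * f - f * p) * a * (f * p))]
  linarith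

/-- A positive norm-one element `a` admits functions `f` and `g` of `a` supported near the top of
its spectrum, with `f g = g ≠ 0` and `f = u a u*`. -/
theorem exists_top_support [Nontrivial A] {a : A} (ha : IsPos a) (ha1 : ‖a‖ = 1) {η : ℝ}
    (hη : 0 < η) (hη' : η ≤ 1 / 2) :
    ∃ f g u m : A, IsSelfAdjoint f ∧ ‖f‖ ≤ 1 ∧ IsSelfAdjoint g ∧ g ≠ 0 ∧ f * g = g ∧
      f = u * a * star u ∧ f * a * f = (1 - η) • (f * f) + star m * m := by
  obtain ⟨x, rfl⟩ := ha
  set a := star x * x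
  have hsa : IsSelfAdjoint a := .star_mul_self x
  have hone : (1 : ℝ) ∈ spectrum ℝ a := by
    let _ := CStarAlgebra.spectralOrder A
    let _ := CStarAlgebra.spectralOrderedRing A
    exact ha1 ▸ CStarAlgebra.norm_mem_spectrum_of_nonneg (star_mul_self_nonneg x)
  let φ : ℝ → ℝ := fun t => max 0 (min 1 ((t - (1 - η)) * (2 / η)))
  let γ : ℝ → ℝ := fun t => max 0 (t - (1 - η / 2))
  let υ : ℝ → ℝ := fun t => √(φ t / max t (1 / 2))
  let ω : ℝ → ℝ := fun t => φ t * √(max 0 (t - (1 - η)))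
  have hφ : Continuous φ := by fun_prop
  have hγ : Continuous γ := by fun_prop
  have hω : Continuous ω := by fun_prop
  have hmax : ∀ t : ℝ, 0 < max t (1 / 2) := fun t => lt_max_of_lt_right (by norm_num)
  have hυ : Continuous υ := (hφ.div (by fun_prop) fun t => (hmax t).ne').sqrt
  have hφ0 : ∀ t, 0 ≤ φ t := fun t => le_max_left _ _
  have hφz : ∀ t ≤ 1 - η, φ t = 0 := fun t ht => max_eq_left <| (min_le_right _ _).trans <|
    mul_nonpos_of_nonpos_of_nonneg (by linarith) (by positivity)
  have hφγ : ∀ t, φ t * γ t = γ t := by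
    intro t
    rcases le_total t (1 - η / 2) with ht | ht
    · simp [γ, max_eq_left (sub_nonpos.2 ht)]
    · have h1 : 1 ≤ (t - (1 - η)) * (2 / η) := by
        rw [← mul_div_assoc, le_div_iff₀ hη]; linarith
      simp [φ, min_eq_left h1]
  have hmul : ∀ k l : ℝ → ℝ, Continuous k → Continuous l →
      cfc k a * cfc l a = cfc (fun t => k t * l t) a := fun k l hk hl =>
    (cfc_mul k l a hk.continuousOn hl.continuousOn).symm
  have hstar : ∀ k : ℝ → ℝ, star (cfc k a) = cfc k a := fun k =>
    (cfc_predicate k a : IsSelfAdjoint _).star_eq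
  have hsandwich : ∀ k : ℝ → ℝ, Continuous k →
      cfc k a * a * cfc k a = cfc (fun t => k t * t * k t) a := fun k hk => by
    rw [← hmul (fun t => k t * t) k (by fun_prop) hk, ← hmul k (fun t => t) hk (by fun_prop),
      cfc_id' ℝ a]
  refine ⟨cfc φ a, cfc γ a, cfc υ a, cfc ω a, cfc_predicate _ a, ?_, cfc_predicate _ a, ?_, ?_,
    ?_, ?_⟩
  · refine norm_cfc_le zero_le_one fun t _ => ?_
    rw [Real.norm_of_nonneg (hφ0 t)]
    exact max_le zero_le_one (min_le_left _ _)
  · intro h0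
    have := norm_apply_le_norm_cfc γ a hone hγ.continuousOn hsa
    rw [h0, norm_zero, norm_le_zero_iff] at this
    simp only [γ, max_eq_left_iff] at this
    linarith
  · rw [hmul _ _ hφ hγ]
    exact cfc_congr fun t _ => hφγ t
  · rw [hstar, hsandwich υ hυ]
    refine cfc_congr fun t _ => ?_
    have hsq : υ t * υ t = φ t / max t (1 / 2) :=
      Real.mul_self_sqrt (div_nonneg (hφ0 t) (hmax t).le)
    have hcomm : υ t * t * υ t = υ t * υ t * t := by ring
    simp only [hcomm, hsq]
    rcases le_total t (1 / 2) with ht | ht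
    · simp [hφz t (by linarith)]
    · rw [max_eq_left ht, div_mul_cancel₀ _ (by linarith)]
  · rw [hsandwich φ hφ, hmul _ _ hφ hφ, hstar, hmul _ _ hω hω, ← cfc_const_mul _ _ a (by fun_prop),
      ← cfc_add a _ _ (by fun_prop) (by fun_prop)]
    refine cfc_congr fun t _ => ?_
    have hsq : √(max 0 (t - (1 - η))) * √(max 0 (t - (1 - η))) = max 0 (t - (1 - η)) :=
      Real.mul_self_sqrt (le_max_left _ _)
    have hωω : ω t * ω t = φ t * φ t * max 0 (t - (1 - η)) := by
      rw [← hsq]; simp only [ω]; ring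
    simp only [hωω]
    rcases le_total t (1 - η) with ht | ht
    · simp [hφz t ht]
    · rw [max_eq_right (by linarith)]; ring

/-- If `A` is a finite, infinite-dimensional, simple, unital
C*-algebra, `Ω` is a class of unital C*-algebras, and `A ∈ TAΩ`
(Elliott–Niu tracial approximation), then `A ∈ GTAΩ`. -/
theorem memGTA_of_memTA
    (hfin : ∀ v : A, star v * v = 1 → v * star v = 1)
    (hinf : ¬ FiniteDimensional ℂ A)
    (hA : IsSimpleCStarAlgebra A)
    (Ω : Set (NonUnitalStarSubalgebra ℂ A))
    (hΩ : ∀ B ∈ Ω, ∃ e ∈ B, ∀ b ∈ B, e * b = b ∧ b * e = b)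
    (h : MemTA Ω) : MemGTA Ω := by
  intro ε hε F a b ha ha1 hb _
  have : Nontrivial A := hA.1
  obtain ⟨f, g, u, m, hf, hf1, hg, hg0, hfg, hfu, hm⟩ :=
    exists_top_support (η := min (ε / 2) (1 / 2)) ha ha1 (by positivity) (min_le_right _ _)
  obtain ⟨s₀, d₀, hs, hs0, hd0, hsd⟩ := exists_orthogonal_of_infinite hinf hA hg hg0
  have hfs : f * (g * s₀) = g * s₀ := by rw [← mul_assoc, hfg]
  have hfd : f * (g * d₀) = g * d₀ := by rw [← mul_assoc, hfg]
  generalize g * s₀ = s at hs hs0 hsd hfs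
  generalize g * d₀ = d at hd0 hsd hfd
  have hss : s * s = (s * u) * a * star (s * u) := by
    rw [star_mul, hs.star_eq]
    calc s * s = s * (f * s) := by rw [hfs]
      _ = _ := by rw [hfu]; simp only [mul_assoc]
  have hss0 : s * s ≠ 0 := fun h0 => hs0 <| by
    rwa [← CStarRing.star_mul_self_eq_zero_iff, hs.star_eq]
  classical
  obtain ⟨B, hB, hBc, p, hpB, hp, hpp, -, hcomm, happ, hcz⟩ :=
    h (ε / 400) (by positivity) (insert f F) (s * s) ⟨s, by rw [hs.star_eq]⟩ hss0
  have hp1 : ‖p‖ ≤ 1 := IsStarProjection.norm_le p ⟨hpp, hp⟩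
  refine ⟨B, hB, hBc, p, hpB, ⟨p, by rw [hp.star_eq, hpp]⟩, hp1, fun x hx => ?_, fun x hx => ?_,
    ?_, ?_⟩
  · obtain ⟨y, hyB, hy⟩ := happ x (Finset.mem_insert_of_mem hx)
    have hc := hcomm x (Finset.mem_insert_of_mem hx)
    refine ⟨⟨y, hyB, ?_⟩, ⟨y, hyB, ?_⟩⟩
    · calc ‖p * x - y‖ = ‖p * (p * x - x * p) + (p * x * p - y)‖ := by
            rw [mul_sub, ← mul_assoc, hpp, ← mul_assoc]; congr 1; abel
        _ ≤ ‖p * (p * x - x * p)‖ + ‖p * x * p - y‖ := norm_add_le _ _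
        _ ≤ ‖p‖ * ‖p * x - x * p‖ + ‖p * x * p - y‖ := by gcongr; exact norm_mul_le _ _
        _ ≤ 1 * (ε / 400) + ε / 400 := by gcongr
        _ < ε := by linarith
    · calc ‖x * p - y‖ = ‖(p * x * p - y) - (p * x - x * p) * p‖ := by
            rw [sub_mul, mul_assoc x p p, hpp]; congr 1; abel
        _ ≤ ‖p * x * p - y‖ + ‖(p * x - x * p) * p‖ := norm_sub_le _ _
        _ ≤ ‖p * x * p - y‖ + ‖p * x - x * p‖ * ‖p‖ := by gcongr; exact norm_mul_le _ _
        _ ≤ ε / 400 + ε / 400 * 1 := by gcongr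
        _ < ε := by linarith
  · exact (hcomm x (Finset.mem_insert_of_mem hx)).trans (by linarith)
  · obtain ⟨y, rfl⟩ := hb
    have hbs : star (star y * y) = star y * y := by simp
    generalize star y * y = b at hbs
    have hconj : b * b - b * p * b = b * (1 - p) * star b := by rw [hbs]; noncomm_ring
    have hsa : IsSelfAdjoint (b * (1 - p) * star b) :=
      ((IsSelfAdjoint.one A).sub hp).conjugate b
    obtain ⟨k, hk⟩ := exists_cutPos_eq_conj hsa hε
    rw [hconj, hk]
    rw [hss] at hcz
    exact (hcz.of_conj.conj b).conj k
  · by_contra! hlt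
    have hpf : ‖p * f‖ ≤ 1 / 10 := by
      have := norm_sq_mul_le_of_compression_lt hp hpp ha1.le hf hf1
        ((min_le_right _ _).trans (by norm_num)) hm hlt.le
        (hcomm f (Finset.mem_insert_self _ _)).le
      have hle : ε / 2 * ‖p * f‖ ^ 2 ≤ ε / 2 * (1 / 10) ^ 2 := by
        have := mul_le_mul_of_nonneg_right
          (show ε / 2 ≤ ε - min (ε / 2) (1 / 2) by linarith [min_le_left (ε / 2) (1 / 2)])
          (sq_nonneg ‖p * f‖)
        linarith
      exact (sq_le_sq₀ (norm_nonneg _) (by norm_num)).1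
        (le_of_mul_le_mul_left hle (by positivity))
    obtain ⟨v, hv⟩ := hcz
    obtain ⟨n, hn⟩ := (hv.eventually (gt_mem_nhds (show (0 : ℝ) < 1 / 4 by norm_num))).exists
    have hq1 : ‖1 - p‖ ≤ 1 := IsStarProjection.norm_le _ (IsStarProjection.one_sub ⟨hpp, hp⟩)
    have hqs : star (1 - p) = 1 - p := by simp [hp.star_eq]
    have hpq : p * (1 - p) = 0 := by rw [mul_sub, hpp, mul_one, sub_self]
    have hqq : (1 - p) * (1 - p) = 1 - p := by rw [sub_mul, hpq, one_mul, sub_zero]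
    refine hd0 (eq_zero_of_almost_supported hfin hp hpp (z := (1 - p) * v n * s) ?_ hf ?_ hfd
      ?_ hpf)
    · calc ‖(1 - p) * v n * s * star ((1 - p) * v n * s) - (1 - p)‖
          = ‖(1 - p) * (v n * (s * s) * star (v n) - (1 - p)) * (1 - p)‖ := by
            rw [star_mul, star_mul, hs.star_eq, hqs]
            generalize 1 - p = q at hqq
            rw [mul_sub, sub_mul, hqq, hqq]
            simp only [mul_assoc]
        _ ≤ ‖1 - p‖ * ‖v n * (s * s) * star (v n) - (1 - p)‖ * ‖1 - p‖ := norm_mul₃_le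
        _ ≤ 1 * (1 / 4) * 1 := by gcongr
        _ = 1 / 4 := by norm_num
    · have : s * f = s := by rw [← hs.star_eq, ← hf.star_eq, ← star_mul, hfs]
      rw [mul_assoc, this]
    · rw [mul_assoc, hsd, mul_zero]
end

section
/- Let Ω be a class of C*-algebras and let A be a simple unital C*-algebra belonging to the class GTAΩ. Then for every ε > 0, every m ∈ ℤ_{>0}, all elements x_1, …, x_m ∈ A, and every positive element a ∈ A_+ with ‖a‖ = 1, there exist elements y_1, …, y_m ∈ A, a C*-subalgebra B ⊆ A with B ∈ Ω, and an element r ∈ B_+ with ‖r‖ ≤ 1, such that: (1) ‖y_j − x_j‖ < ε for all j = 1, …, m; (2) r·y_j ∈ B and y_j·r ∈ B (exact membership, not approximate) for all j = 1, …, m; (3) ‖r·x_j − x_j·r‖ < ε for all j = 1, …, m; (4) 1_A − r ⪯_A a; (5) ‖rar‖ ≥ 1 − ε. -/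
open Filter Topology

variable {A : Type*} [CStarAlgebra A]

section Positive

theorem IsPos.isSelfAdjoint {s : A} (hs : IsPos s) : IsSelfAdjoint s := by
  obtain ⟨x, rfl⟩ := hs
  exact IsSelfAdjoint.star_mul_self x

theorem IsPos.spectrum_subset_Icc [Nontrivial A] {s : A} (hs : IsPos s) (hs1 : ‖s‖ ≤ 1) :
    spectrum ℝ s ⊆ Set.Icc 0 1 := by
  intro t ht
  refine ⟨?_, (Real.le_norm_self t).trans ((spectrum.norm_le_norm_of_mem ht).trans hs1)⟩
  obtain ⟨x, rfl⟩ := hs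
  exact spectrum_star_mul_self_nonneg t ht

theorem isPos_cfc {f : ℝ → ℝ} (hf : Continuous f) {s : A}
    (hf0 : ∀ t ∈ spectrum ℝ s, 0 ≤ f t) : IsPos (cfc f s) := by
  have hsa : IsSelfAdjoint (cfc (fun t => √(f t)) s) := cfc_predicate _ s
  refine ⟨cfc (fun t => √(f t)) s, ?_⟩
  rw [hsa.star_eq, ← cfc_mul (fun t => √(f t)) (fun t => √(f t)) s
    (by fun_prop) (by fun_prop)]
  exact cfc_congr fun t ht => (Real.mul_self_sqrt (hf0 t ht)).symm

end Positive

theorem cfc_mem_of_map_zero {B : NonUnitalStarSubalgebra ℂ A} (hB : IsClosed (B : Set A))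
    {s : A} (hs : s ∈ B) {f : ℝ → ℝ} (hf : Continuous f) (hf0 : f 0 = 0) : cfc f s ∈ B := by
  rw [← cfcₙ_eq_cfc hf.continuousOn hf0]
  exact cfcₙ_mem (𝕜' := ℂ) (hs := hB) f hs

theorem cutPos_one_sub {s : A} (hs : IsSelfAdjoint s) (δ : ℝ) :
    CutPos (1 - s) δ = cfc (fun t : ℝ => max (1 - t - δ) 0) s := by
  have h1 : (1 : A) - s = cfc (fun t : ℝ => 1 - t) s := by
    rw [cfc_sub (fun _ : ℝ => (1 : ℝ)) (fun t => t) s, cfc_const_one ℝ s, cfc_id' ℝ s]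
  rw [CutPos, h1, ← cfc_comp' (fun t : ℝ => max (t - δ) 0) (fun t : ℝ => 1 - t) s]

theorem CuntzBelow.mul_mul_star {c a : A} (h : CuntzBelow c a) (w : A) :
    CuntzBelow (w * c * star w) a := by
  obtain ⟨v, hv⟩ := h
  refine ⟨fun n => w * v n, ?_⟩
  have hlim : Tendsto (fun n => ‖w‖ * ‖v n * a * star (v n) - c‖ * ‖star w‖) atTop (𝓝 0) := by
    simpa using (hv.const_mul ‖w‖).mul_const ‖star w‖
  refine squeeze_zero (fun _ => norm_nonneg _) (fun n => ?_) hlim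
  have key : w * v n * a * star (w * v n) - w * c * star w
      = w * (v n * a * star (v n) - c) * star w := by
    rw [star_mul]; noncomm_ring
  rw [key]
  exact (norm_mul_le _ _).trans (mul_le_mul_of_nonneg_right (norm_mul_le _ _) (norm_nonneg _))

/-- If `e = Q * s = s * Q` acts as a unit on `r` and `s * x`, `x * s` are within `δ` of `B`, then
`x` can be perturbed to `y` such that `r * y` and `y * r` lie in `B` exactly. -/
theorem exists_near_mul_mem {B : NonUnitalStarSubalgebra ℂ A} {r e Q s x : A} {C δ : ℝ}
    (hr : r ∈ B) (he : e ∈ B) (hQB : ∀ b ∈ B, Q * b ∈ B ∧ b * Q ∈ B)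
    (hQs : Q * s = e) (hsQ : s * Q = e) (hre : r * e = r) (her : e * r = r)
    (he1 : ‖e‖ ≤ 1) (hC : 0 < C) (hQ : ‖Q‖ ≤ C)
    (hl : ApproxIn (s * x) (B : Set A) δ) (hrt : ApproxIn (x * s) (B : Set A) δ) :
    ∃ y, ‖y - x‖ < 3 * (C * δ) ∧ r * y ∈ B ∧ y * r ∈ B := by
  obtain ⟨b, hb, hbd⟩ := hl
  obtain ⟨b', hb', hbd'⟩ := hrt
  have hz : Q * b + b' * Q - Q * b * e ∈ B :=
    sub_mem (add_mem (hQB b hb).1 (hQB b' hb').2) (mul_mem (hQB b hb).1 he)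
  refine ⟨(1 - e) * x * (1 - e) + (Q * b + b' * Q - Q * b * e), ?_, ?_, ?_⟩
  · have hleft : ‖Q * (s * x - b)‖ < C * δ := by
      refine (norm_mul_le _ _).trans_lt ?_
      exact (mul_le_mul_of_nonneg_right hQ (norm_nonneg _)).trans_lt (by gcongr)
    have hright : ‖(x * s - b') * Q‖ < C * δ := by
      refine (norm_mul_le _ _).trans_lt ?_
      rw [mul_comm]
      exact (mul_le_mul_of_nonneg_right hQ (norm_nonneg _)).trans_lt (by gcongr)
    have hboth : ‖Q * (s * x - b) * e‖ < C * δ :=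
      ((norm_mul_le _ _).trans (mul_le_of_le_one_right (norm_nonneg _) he1)).trans_lt hleft
    have key : (1 - e) * x * (1 - e) + (Q * b + b' * Q - Q * b * e) - x
        = Q * (s * x - b) * e - Q * (s * x - b) - (x * s - b') * Q := by
      have h1 : Q * (s * x - b) = e * x - Q * b := by rw [mul_sub, ← mul_assoc, hQs]
      have h2 : (x * s - b') * Q = x * e - b' * Q := by rw [sub_mul, mul_assoc, hsQ]
      rw [h1, h2]; noncomm_ring
    rw [key]
    linarith [norm_sub_le (Q * (s * x - b) * e - Q * (s * x - b)) ((x * s - b') * Q),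
      norm_sub_le (Q * (s * x - b) * e) (Q * (s * x - b))]
  · have h0 : r * (1 - e) = 0 := by rw [mul_sub, mul_one, hre, sub_self]
    rw [mul_add, ← mul_assoc, ← mul_assoc, h0, zero_mul, zero_mul, zero_add]
    exact mul_mem hr hz
  · have h0 : (1 - e) * r = 0 := by rw [sub_mul, one_mul, her, sub_self]
    rw [add_mul, mul_assoc _ _ r, h0, mul_zero, zero_add]
    exact mul_mem hz hr

section Cutoff

/-- The weight `c` for which `1 - c(t) (1 - t - δ)₊` vanishes on `[0, η]`. -/
noncomputable def cutoffWeight (η δ t : ℝ) : ℝ := (max (1 - δ - η) (1 - t - δ))⁻¹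

/-- A cutoff function on `[0, 1]`, close to the identity, that vanishes on `[0, η]` and equals `1`
on `[1 - δ, 1]`. -/
noncomputable def cutoff (η δ t : ℝ) : ℝ := 1 - cutoffWeight η δ t * max (1 - t - δ) 0

variable {η δ : ℝ}

theorem cutoffWeight_pos (h : η + δ < 1) (t : ℝ) : 0 < cutoffWeight η δ t :=
  inv_pos.2 (lt_max_of_lt_left (by linarith))

theorem continuous_cutoffWeight (h : η + δ < 1) : Continuous (cutoffWeight η δ) :=
  Continuous.inv₀ (by fun_prop) fun _ => (lt_max_of_lt_left (by linarith)).ne'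

theorem continuous_cutoff (h : η + δ < 1) : Continuous (cutoff η δ) := by
  have := continuous_cutoffWeight h
  unfold cutoff
  fun_prop

theorem cutoff_of_le (h : η + δ < 1) {t : ℝ} (ht : t ≤ η) : cutoff η δ t = 0 := by
  rw [cutoff, cutoffWeight, max_eq_right (by linarith), max_eq_left (by linarith),
    inv_mul_cancel₀ (by linarith), sub_self]

theorem cutoff_mem_Icc (h : η + δ < 1) (t : ℝ) : cutoff η δ t ∈ Set.Icc (0 : ℝ) 1 := by
  have hm : (0 : ℝ) < max (1 - δ - η) (1 - t - δ) := lt_max_of_lt_left (by linarith)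
  have h0 : 0 ≤ cutoffWeight η δ t * max (1 - t - δ) 0 :=
    mul_nonneg (cutoffWeight_pos h t).le (le_max_right _ _)
  have h1 : cutoffWeight η δ t * max (1 - t - δ) 0 ≤ 1 := by
    rw [cutoffWeight, inv_mul_le_one₀ hm]
    exact max_le (le_max_right _ _) hm.le
  exact ⟨by rw [cutoff]; linarith, by rw [cutoff]; linarith⟩

theorem abs_cutoff_sub_le (hη : 0 ≤ η) (hδ : 0 ≤ δ) (h : η + δ < 1) {t : ℝ}
    (ht : t ∈ Set.Icc (0 : ℝ) 1) : |cutoff η δ t - t| ≤ η + δ := by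
  obtain ⟨ht0, ht1⟩ := ht
  rcases le_total t η with h1 | h1
  · rw [cutoff_of_le h h1, abs_le]; constructor <;> linarith
  rw [cutoff, cutoffWeight, max_eq_left (by linarith)]
  have hD : 0 < 1 - δ - η := by linarith
  rcases le_total (1 - δ) t with h2 | h2
  · rw [max_eq_right (by linarith), mul_zero, abs_le]; constructor <;> linarith
  · rw [max_eq_left (by linarith)]
    have key : 1 - (1 - δ - η)⁻¹ * (1 - t - δ) - t
        = ((1 - t) * (1 - δ - η) - (1 - t - δ)) / (1 - δ - η) := by
      field_simp
      ring
    rw [key, abs_le, le_div_iff₀ hD, div_le_iff₀ hD]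
    constructor <;> nlinarith

/-- The function `(max η t)⁻¹`, by which `t` is multiplied to obtain `min (t / η) 1`. -/
noncomputable def truncInv (η t : ℝ) : ℝ := (max η t)⁻¹

theorem continuous_truncInv (hη : 0 < η) : Continuous (truncInv η) :=
  Continuous.inv₀ (by fun_prop) fun _ => (lt_max_of_lt_left hη).ne'

theorem abs_truncInv_le (hη : 0 < η) (t : ℝ) : |truncInv η t| ≤ η⁻¹ := by
  rw [truncInv, abs_of_pos (inv_pos.2 (lt_max_of_lt_left hη))]
  exact inv_anti₀ hη (le_max_left _ _)

theorem abs_truncInv_mul_self_le (hη : 0 < η) {t : ℝ} (ht : 0 ≤ t) :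
    |truncInv η t * t| ≤ 1 := by
  have hm : 0 < max η t := lt_max_of_lt_left hη
  rw [truncInv, abs_of_nonneg (mul_nonneg (inv_pos.2 hm).le ht), inv_mul_le_one₀ hm]
  exact le_max_right _ _

theorem cutoff_mul_truncInv_mul_self (hη : 0 < η) (h : η + δ < 1) (t : ℝ) :
    cutoff η δ t * (truncInv η t * t) = cutoff η δ t := by
  rcases le_total t η with h1 | h1
  · rw [cutoff_of_le h h1, zero_mul]
  · rw [truncInv, max_eq_right h1, inv_mul_cancel₀ (by linarith), mul_one]

end Cutoff

theorem CuntzBelow.one_sub_cfc_cutoff {s a : A} {η δ : ℝ} (hs : IsSelfAdjoint s)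
    (h : η + δ < 1) (hsa : CuntzBelow (CutPos (1 - s) δ) a) :
    CuntzBelow (1 - cfc (cutoff η δ) s) a := by
  have hw := continuous_cutoffWeight h
  have hwsa : IsSelfAdjoint (cfc (fun t => √(cutoffWeight η δ t)) s) := cfc_predicate _ s
  have key : 1 - cfc (cutoff η δ) s = cfc (fun t => √(cutoffWeight η δ t)) s * CutPos (1 - s) δ
      * star (cfc (fun t => √(cutoffWeight η δ t)) s) := by
    have hc := continuous_cutoff h
    rw [hwsa.star_eq, cutPos_one_sub hs, ← cfc_mul _ _ s, ← cfc_mul _ _ s, ← cfc_const_one ℝ s,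
      ← cfc_sub _ _ s]
    refine cfc_congr fun t _ => ?_
    have := Real.mul_self_sqrt (cutoffWeight_pos h t).le
    simp only [cutoff]
    linear_combination (-max (1 - t - δ) 0) * this
  rw [key]
  exact hsa.mul_mul_star _

theorem norm_cfc_sub_self_le {s : A} (hs : IsSelfAdjoint s) {f : ℝ → ℝ} (hf : Continuous f)
    {κ : ℝ} (hκ : 0 ≤ κ) (h : ∀ t ∈ spectrum ℝ s, |f t - t| ≤ κ) : ‖cfc f s - s‖ ≤ κ := by
  nth_rewrite 2 [← cfc_id' ℝ s]
  rw [← cfc_sub _ _ s]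
  exact norm_cfc_le hκ h

theorem norm_commutator_le_add (r s x : A) :
    ‖r * x - x * r‖ ≤ ‖s * x - x * s‖ + 2 * (‖r - s‖ * ‖x‖) := by
  have key : r * x - x * r = (s * x - x * s) + ((r - s) * x - x * (r - s)) := by noncomm_ring
  rw [key]
  linarith [norm_add_le (s * x - x * s) ((r - s) * x - x * (r - s)),
    norm_sub_le ((r - s) * x) (x * (r - s)), norm_mul_le (r - s) x, norm_mul_le x (r - s),
    mul_comm ‖x‖ ‖r - s‖]

theorem norm_mul_mul_le_add {r s a : A} (hr : ‖r‖ ≤ 1) (hs : ‖s‖ ≤ 1) (ha : ‖a‖ ≤ 1) :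
    ‖s * a * s‖ ≤ ‖r * a * r‖ + 2 * ‖r - s‖ := by
  have key : s * a * s = r * a * r - ((r - s) * a * r + s * a * (r - s)) := by noncomm_ring
  have h1 : ‖(r - s) * a * r‖ ≤ ‖r - s‖ :=
    (norm_mul_le _ _).trans <| (mul_le_of_le_one_right (norm_nonneg _) hr).trans <|
      (norm_mul_le _ _).trans (mul_le_of_le_one_right (norm_nonneg _) ha)
  have h2 : ‖s * a * (r - s)‖ ≤ ‖r - s‖ :=
    (norm_mul_le _ _).trans <| mul_le_of_le_one_left (norm_nonneg _) <|
      (norm_mul_le _ _).trans (mul_le_one₀ hs (norm_nonneg _) ha)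
  rw [key]
  linarith [norm_sub_le (r * a * r) ((r - s) * a * r + s * a * (r - s)),
    norm_add_le ((r - s) * a * r) (s * a * (r - s))]

/-- Passing from `s` to the cutoff `r` of `s` turns approximate membership into exact membership
after a small perturbation of `x`. -/
theorem exists_near_cutoff_mul_mem [Nontrivial A] {B : NonUnitalStarSubalgebra ℂ A}
    (hB : IsClosed (B : Set A)) {s x : A} (hsB : s ∈ B) (hs : IsPos s) (hs1 : ‖s‖ ≤ 1)
    {η δ γ : ℝ} (hη : 0 < η) (h : η + δ < 1)
    (hl : ApproxIn (s * x) (B : Set A) γ) (hr : ApproxIn (x * s) (B : Set A) γ) :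
    ∃ y, ‖y - x‖ < 3 * (η⁻¹ * γ) ∧ cfc (cutoff η δ) s * y ∈ B ∧ y * cfc (cutoff η δ) s ∈ B := by
  have hsa := hs.isSelfAdjoint
  have hc := continuous_cutoff h
  have hq := continuous_truncInv hη
  have hQs : cfc (truncInv η) s * s = cfc (fun t => truncInv η t * t) s := by
    nth_rewrite 2 [← cfc_id' ℝ s]
    rw [← cfc_mul _ _ s]
  have hre : cfc (cutoff η δ) s * cfc (fun t => truncInv η t * t) s = cfc (cutoff η δ) s := by
    rw [← cfc_mul _ _ s]
    exact cfc_congr fun t _ => cutoff_mul_truncInv_mul_self hη h t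
  have hQ : cfc (truncInv η) s = cfc (fun t => truncInv η t - truncInv η 0) s
      + (truncInv η 0 : ℂ) • (1 : A) := by
    rw [cfc_sub _ _ s, cfc_const _ s, Algebra.algebraMap_eq_smul_one, Complex.coe_smul,
      sub_add_cancel]
  have hpB : cfc (fun t => truncInv η t - truncInv η 0) s ∈ B :=
    cfc_mem_of_map_zero hB hsB (by fun_prop) (sub_self _)
  refine exists_near_mul_mem (Q := cfc (truncInv η) s) (s := s)
    (cfc_mem_of_map_zero hB hsB hc (cutoff_of_le h hη.le))
    (cfc_mem_of_map_zero hB hsB (f := fun t => truncInv η t * t) (by fun_prop) (mul_zero _))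
    (fun b hb => ?_) hQs ?_ hre ?_ ?_ (inv_pos.2 hη) ?_ hl hr
  · rw [hQ, add_mul, mul_add, smul_mul_assoc, mul_smul_comm, one_mul, mul_one]
    exact ⟨add_mem (mul_mem hpB hb) (SMulMemClass.smul_mem _ hb),
      add_mem (mul_mem hb hpB) (SMulMemClass.smul_mem _ hb)⟩
  · rw [← hQs]
    simpa only [cfc_id' ℝ s] using (cfc_commute_cfc (fun t => t) (truncInv η) s).eq
  · rw [(cfc_commute_cfc _ (cutoff η δ) s).eq, hre]
  · exact norm_cfc_le zero_le_one fun t ht =>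
      abs_truncInv_mul_self_le hη (hs.spectrum_subset_Icc hs1 ht).1
  · exact norm_cfc_le (inv_pos.2 hη).le fun t _ => abs_truncInv_le hη t

/-- If `A` is a simple unital C*-algebra in `GTAΩ`, then for any
`ε > 0`, finitely many `x₁, …, x_m ∈ A` and positive `a` of norm one there are
`y₁, …, y_m ∈ A`, a C*-subalgebra `B ∈ Ω` and a positive contraction `r ∈ B` with
`‖y j - x j‖ < ε`, `r * y j ∈ B`, `y j * r ∈ B`, `‖r * x j - x j * r‖ < ε`,
`1 - r ≾_A a` and `‖r * a * r‖ ≥ 1 - ε`. -/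
theorem memGTA_exact_membership
    (hA : IsSimpleCStarAlgebra A)
    (Ω : Set (NonUnitalStarSubalgebra ℂ A))
    (h : MemGTA Ω) :
    ∀ ε : ℝ, 0 < ε → ∀ m : ℕ, 0 < m → ∀ x : Fin m → A, ∀ a : A, IsPos a → ‖a‖ = 1 →
      ∃ y : Fin m → A, ∃ B ∈ Ω, IsClosed (B : Set A) ∧
        ∃ r ∈ B, IsPos r ∧ ‖r‖ ≤ 1 ∧
          (∀ j, ‖y j - x j‖ < ε) ∧
          (∀ j, r * y j ∈ B ∧ y j * r ∈ B) ∧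
          (∀ j, ‖r * x j - x j * r‖ < ε) ∧
          CuntzBelow (1 - r) a ∧
          1 - ε ≤ ‖r * a * r‖ := by
  classical
  intro ε hε m _ x a ha ha1
  have : Nontrivial A := hA.1
  set M : ℝ := 1 + ∑ j, ‖x j‖ with hM
  have hsum : 0 ≤ ∑ j, ‖x j‖ := Finset.sum_nonneg fun _ _ => norm_nonneg _
  have hxM : ∀ j, ‖x j‖ ≤ M := fun j => by
    linarith [Finset.single_le_sum (f := fun j => ‖x j‖) (fun i _ => norm_nonneg (x i))
      (Finset.mem_univ j)]
  obtain ⟨κ, hκ, hκε, hκ1⟩ : ∃ κ : ℝ, 0 < κ ∧ κ ≤ ε ∧ κ ≤ 1 :=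
    ⟨min ε 1, lt_min hε one_pos, min_le_left _ _, min_le_right _ _⟩
  obtain ⟨η, hη, hηM⟩ : ∃ η : ℝ, 0 < η ∧ η * M = κ / 8 :=
    ⟨κ / 8 / M, by positivity, div_mul_cancel₀ _ (by positivity)⟩
  have hηκ : η ≤ κ / 8 := by nlinarith
  obtain ⟨δ, hδ, hδη⟩ : ∃ δ : ℝ, 0 < δ ∧ δ = η * κ / 8 := ⟨_, by positivity, rfl⟩
  have hδη' : δ ≤ η / 8 := by nlinarith
  have hlt : η + δ < 1 := by linarith
  obtain ⟨B, hBΩ, hB, s, hsB, hs, hs1, happ, hcomm, hcut, hnorm⟩ :=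
    h δ hδ (Finset.univ.image x) a 1 ha ha1 ⟨1, by simp⟩ norm_one.le
  simp only [Finset.mem_image, Finset.mem_univ, true_and, forall_exists_index,
    forall_apply_eq_imp_iff] at happ hcomm
  rw [mul_one, one_mul, mul_one] at hcut
  have hsa := hs.isSelfAdjoint
  have hspec := hs.spectrum_subset_Icc hs1
  have hcont := continuous_cutoff hlt
  have hr1 : ‖cfc (cutoff η δ) s‖ ≤ 1 := norm_cfc_le zero_le_one fun t _ => by
    rw [Real.norm_of_nonneg (cutoff_mem_Icc hlt t).1]
    exact (cutoff_mem_Icc hlt t).2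
  have hrs : ‖cfc (cutoff η δ) s - s‖ ≤ η + δ :=
    norm_cfc_sub_self_le hsa hcont (by positivity) fun t ht =>
      abs_cutoff_sub_le hη.le hδ.le hlt (hspec ht)
  choose y hyx hyB using fun j =>
    exists_near_cutoff_mul_mem (δ := δ) hB hsB hs hs1 hη hlt (happ j).1 (happ j).2
  have hηδ : η⁻¹ * δ = κ / 8 := by rw [hδη]; field_simp
  refine ⟨y, B, hBΩ, hB, cfc (cutoff η δ) s,
    cfc_mem_of_map_zero hB hsB hcont (cutoff_of_le hlt hη.le),
    isPos_cfc hcont fun t _ => (cutoff_mem_Icc hlt t).1, hr1, fun j => ?_, hyB, fun j => ?_,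
    hcut.one_sub_cfc_cutoff hsa hlt, ?_⟩
  · linarith [hyx j]
  · have hbound : ‖cfc (cutoff η δ) s - s‖ * ‖x j‖ ≤ (2 * η) * M :=
      mul_le_mul (by linarith) (hxM j) (norm_nonneg _) (by positivity)
    linarith [norm_commutator_le_add (cfc (cutoff η δ) s) s (x j), hcomm j]
  · linarith [norm_mul_mul_le_add hr1 hs1 ha1.le]
end
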